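/- Let I and I' be two top-k partial rankings of {1,…,n}. With the notation p, j_l, c_{j_l}, c'_{j_l}, r, u_j, u'_j, m, and n' = n−k−1, the average Spearman footrule distance satisfies d_{S,avg}(I,I') = Σ_{l=1}^p |c_{j_l} − c'_{j_l}| + r(n+k+1) − Σ_{j=1}^r (u_j + u'_j) + m·n' − m·n'(2n'+1)/(3(n'+1)). -/

import Mathlib

/-!
The footrule is a sum over items, so by linearity the average distance is the sum over items `x` of
the mean of `|σ x - σ' x|` with `σ ∈ E_I` and `σ' ∈ E_{I'}` chosen independently and uniformly.

If `x` is ranked by `I`, then `σ x` is constant on `E_I` (`mean_ranked`). Otherwise `σ x` is uniformly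
distributed on the `n - k` values `k, …, n - 1` (0-based), because composing with the transposition
of two such values preserves `E_I` (`mean_unranked`). Thus an item ranked by both contributes the
difference of its positions; an item ranked by only one, at position `u`, contributes
`(n + k + 1) / 2 - u`; and an item ranked by neither contributes the mean distance
`(N² - 1) / (3 N)` of two independent uniform points of an interval of `N = n - k` integers
(`sum_abs_sub_range`). There are `r` items ranked by `I` only, `r` ranked by `I'` only and `m` ranked
by neither, which gives the formula.
-/

open Finset

/-- Kendall's tau distance on the symmetric group `S_n`. -/
def kendallTau {n : ℕ} (π σ : Equiv.Perm (Fin n)) : ℕ :=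
  ((Finset.univ : Finset (Fin n × Fin n)).filter fun p =>
    p.1 < p.2 ∧ ((σ p.2 < σ p.1 ∧ π p.1 < π p.2) ∨ (σ p.1 < σ p.2 ∧ π p.2 < π p.1))).card

/-- Hamming distance on the symmetric group `S_n`. -/
def permHammingDist {n : ℕ} (π σ : Equiv.Perm (Fin n)) : ℕ :=
  (Finset.univ.filter fun i : Fin n => π i ≠ σ i).card

/-- Spearman's footrule distance on the symmetric group `S_n`. -/
def spearmanFootrule {n : ℕ} (π σ : Equiv.Perm (Fin n)) : ℕ :=
  ∑ i : Fin n, ((π i : ℤ) - (σ i : ℤ)).natAbs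

/-- The set `E_I` of permutations compatible with the top-`k` partial ranking
`I = (i_1, …, i_k)`: those `σ` with `σ(i_l) = l` for `l = 1, …, k`. -/
def topCompat {n k : ℕ} (hk : k ≤ n) (I : Fin k → Fin n) : Finset (Equiv.Perm (Fin n)) :=
  Finset.univ.filter fun σ => ∀ l : Fin k, σ (I l) = Fin.castLE hk l

/-- Average distance between two finite sets of permutations. -/
noncomputable def davgSets {n : ℕ} (d : Equiv.Perm (Fin n) → Equiv.Perm (Fin n) → ℕ)
    (A B : Finset (Equiv.Perm (Fin n))) : ℝ :=
  (∑ σ ∈ A, ∑ σ' ∈ B, (d σ σ' : ℝ)) / (A.card * B.card)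

/-- The 1-based position of `x` in the tuple `I` (and `0` if `x` does not occur in `I`). -/
def pos1 {n k : ℕ} (I : Fin k → Fin n) (x : Fin n) : ℕ :=
  ∑ l : Fin k, if I l = x then l.1 + 1 else 0

/-- The set `{j_1, …, j_p}` of items ranked by both top-`k` partial rankings. -/
def interJ {n k : ℕ} (I I' : Fin k → Fin n) : Finset (Fin n) :=
  (Finset.univ.image I) ∩ (Finset.univ.image I')

/-- The set `Ĩ` of items ranked by `I` but not by `I'`. -/
def tildeSet {n k : ℕ} (I I' : Fin k → Fin n) : Finset (Fin n) :=
  (Finset.univ.image I) \ interJ I I'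

lemma topCompat_nonempty {n k : ℕ} (hk : k ≤ n) (I : Fin k → Fin n)
    (hI : Function.Injective I) : (topCompat hk I).Nonempty := by
  have h := Equiv.Perm.isMultiplyPretransitive (Fin n) k
  obtain ⟨g, hg⟩ := h.exists_smul_eq (⟨I, hI⟩ : Fin k ↪ Fin n) (Fin.castLEEmb hk)
  refine ⟨g, ?_⟩
  simp only [topCompat, Finset.mem_filter, Finset.mem_univ, true_and]
  intro l
  exact DFunLike.congr_fun hg l

lemma pos1_apply {n k : ℕ} (I : Fin k → Fin n) (hI : Function.Injective I) (l : Fin k) :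
    pos1 I (I l) = l.1 + 1 := by
  simp [pos1, hI.eq_iff]

lemma mean_ranked {n k : ℕ} (hk : k ≤ n) (I : Fin k → Fin n) (hI : Function.Injective I)
    (x : Fin n) (hx : x ∈ Finset.univ.image I) (f : ℝ → ℝ) :
    ∑ σ ∈ topCompat hk I, f ((σ x : ℕ) : ℝ)
      = (topCompat hk I).card * f ((pos1 I x : ℝ) - 1) := by
  obtain ⟨l, -, rfl⟩ := Finset.mem_image.1 hx
  rw [Finset.sum_congr rfl (g := fun _ => f ((pos1 I (I l) : ℝ) - 1))]
  · simp
  · intro σ hσ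
    simp only [topCompat, Finset.mem_filter, Finset.mem_univ, true_and] at hσ
    rw [hσ l, pos1_apply I hI]
    simp

lemma le_of_unranked {n k : ℕ} (hk : k ≤ n) (I : Fin k → Fin n)
    (x : Fin n) (hx : x ∉ Finset.univ.image I) (σ : Equiv.Perm (Fin n))
    (hσ : σ ∈ topCompat hk I) : k ≤ (σ x : ℕ) := by
  by_contra! h
  simp only [topCompat, Finset.mem_filter, Finset.mem_univ, true_and] at hσ
  apply hx
  have h1 : σ (I ⟨σ x, h⟩) = σ x := by rw [hσ]; rfl
  exact Finset.mem_image.2 ⟨_, Finset.mem_univ _, σ.injective h1⟩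

/-- The fibres of `σ ↦ σ x` over two values beyond the top `k` are equinumerous: post-composition
with the transposition of these values exchanges them. -/
lemma card_fibre_eq {n k : ℕ} (hk : k ≤ n) (I : Fin k → Fin n) (x v w : Fin n)
    (hv : k ≤ (v : ℕ)) (hw : k ≤ (w : ℕ)) :
    ((topCompat hk I).filter fun σ => σ x = v).card
      = ((topCompat hk I).filter fun σ => σ x = w).card := by
  have key : ∀ σ ∈ topCompat hk I, Equiv.swap v w * σ ∈ topCompat hk I := by
    intro σ hσ
    simp only [topCompat, Finset.mem_filter, Finset.mem_univ, true_and] at hσ ⊢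
    intro l
    rw [Equiv.Perm.mul_apply, hσ l]
    apply Equiv.swap_apply_of_ne_of_ne
    · rintro rfl
      have := l.2
      simp at hv
      omega
    · rintro rfl
      have := l.2
      simp at hw
      omega
  refine Finset.card_bij' (fun σ _ => Equiv.swap v w * σ) (fun σ _ => Equiv.swap v w * σ)
    ?_ ?_ ?_ ?_
  · intro σ hσ
    rw [Finset.mem_filter] at hσ ⊢
    exact ⟨key σ hσ.1, by simp [hσ.2]⟩
  · intro σ hσ
    rw [Finset.mem_filter] at hσ ⊢
    exact ⟨key σ hσ.1, by simp [hσ.2]⟩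
  · intro σ _
    simp
  · intro σ _
    simp

lemma mean_unranked {n k : ℕ} (hk : k < n) (I : Fin k → Fin n)
    (x : Fin n) (hx : x ∉ Finset.univ.image I) (f : ℝ → ℝ) :
    ∑ σ ∈ topCompat hk.le I, f ((σ x : ℕ) : ℝ)
      = (topCompat hk.le I).card * ((∑ i ∈ Finset.range (n - k), f ((k : ℝ) + i)) / (n - k : ℕ)) := by
  set A := topCompat hk.le I with hA
  set c := (A.filter fun σ => σ x = ⟨k, hk⟩).card with hc
  have main : ∀ g : ℝ → ℝ, ∑ σ ∈ A, g ((σ x : ℕ) : ℝ)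
      = c * ∑ i ∈ Finset.range (n - k), g ((k : ℝ) + i) := by
    intro g
    have hmaps : ∀ σ ∈ A, (σ x : ℕ) ∈ Finset.Ico k n := fun σ hσ =>
      Finset.mem_Ico.2 ⟨le_of_unranked hk.le I x hx σ hσ, (σ x).2⟩
    rw [← Finset.sum_fiberwise_of_maps_to hmaps, Finset.sum_Ico_eq_sum_range, Finset.mul_sum]
    refine Finset.sum_congr rfl fun i hi => ?_
    rw [Finset.mem_range] at hi
    have hin : k + i < n := by omega
    rw [Finset.sum_congr rfl (g := fun _ => g ((k : ℝ) + i))]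
    · rw [Finset.sum_const, nsmul_eq_mul, hc,
        card_fibre_eq hk.le I x ⟨k, hk⟩ ⟨k + i, hin⟩ le_rfl (Nat.le_add_right k i)]
      simp [Fin.ext_iff, hA]
    · intro σ hσ
      rw [(Finset.mem_filter.1 hσ).2]
      push_cast
      rfl
  have h1 := main fun _ => 1
  simp only [Finset.sum_const, Finset.card_range, nsmul_eq_mul, mul_one] at h1
  have hN : ((n - k : ℕ) : ℝ) ≠ 0 := by
    have : n - k ≠ 0 := by omega
    exact_mod_cast this
  rw [main f, h1]
  field_simp

lemma sum_const_add_range (a : ℝ) (N : ℕ) :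
    ∑ i ∈ Finset.range N, (a + i) = N * (a + (N - 1) / 2) := by
  induction N with
  | zero => simp
  | succ N ih =>
    rw [Finset.sum_range_succ, ih]
    push_cast
    ring

lemma sum_abs_sub_range (N : ℕ) :
    ∑ i ∈ Finset.range N, ∑ j ∈ Finset.range N, |(i : ℝ) - j| = N * ((N : ℝ) ^ 2 - 1) / 3 := by
  induction N with
  | zero => simp
  | succ N ih =>
    have h1 : ∑ i ∈ Finset.range N, |(i : ℝ) - N| = N * (N + 1) / 2 := by
      rw [Finset.sum_congr rfl (g := fun i : ℕ => (N : ℝ) - i)]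
      · have := sum_const_add_range 0 N
        simp only [zero_add] at this
        rw [Finset.sum_sub_distrib, this]
        simp
        ring
      · intro i hi
        have : (i : ℝ) ≤ N := by exact_mod_cast (Finset.mem_range.1 hi).le
        rw [abs_of_nonpos (by linarith)]
        ring
    have h2 : ∑ i ∈ Finset.range N, |(N : ℝ) - i| = N * (N + 1) / 2 := by
      rw [← h1]
      exact Finset.sum_congr rfl fun i _ => abs_sub_comm _ _
    simp only [Finset.sum_range_succ, Finset.sum_add_distrib]
    rw [ih, h1, h2]
    push_cast
    simp
    ring

/-- The sum, over all pairs of compatible permutations, of the displacement of the item `x`. -/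
noncomputable def itemSum {n k : ℕ} (hk : k ≤ n) (I I' : Fin k → Fin n) (x : Fin n) : ℝ :=
  ∑ σ ∈ topCompat hk I, ∑ σ' ∈ topCompat hk I', |((σ x : ℕ) : ℝ) - ((σ' x : ℕ) : ℝ)|

lemma itemSum_comm {n k : ℕ} (hk : k ≤ n) (I I' : Fin k → Fin n) (x : Fin n) :
    itemSum hk I I' x = itemSum hk I' I x := by
  unfold itemSum
  rw [Finset.sum_comm]
  simp only [abs_sub_comm]

lemma itemSum_both {n k : ℕ} (hk : k ≤ n) (I I' : Fin k → Fin n) (hI : Function.Injective I)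
    (hI' : Function.Injective I') (x : Fin n) (hx : x ∈ Finset.univ.image I)
    (hx' : x ∈ Finset.univ.image I') :
    itemSum hk I I' x = (topCompat hk I).card * (topCompat hk I').card *
      |(pos1 I x : ℝ) - (pos1 I' x : ℝ)| := by
  unfold itemSum
  have h (s : ℝ) := mean_ranked hk I' hI' x hx' (fun t => |s - t|)
  simp only [h]
  rw [mean_ranked hk I hI x hx (fun s => _ * |s - _|)]
  rw [sub_sub_sub_cancel_right]
  ring

lemma itemSum_left {n k : ℕ} (hk : k < n) (I I' : Fin k → Fin n) (hI : Function.Injective I)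
    (x : Fin n) (hx : x ∈ Finset.univ.image I) (hx' : x ∉ Finset.univ.image I') :
    itemSum hk.le I I' x = (topCompat hk.le I).card * (topCompat hk.le I').card *
      (((n : ℝ) + k + 1) / 2 - pos1 I x) := by
  unfold itemSum
  have h (s : ℝ) := mean_unranked hk I' x hx' (fun t => |s - t|)
  simp only [h]
  rw [mean_ranked hk.le I hI x hx
    (fun s => _ * ((∑ i ∈ Finset.range (n - k), |s - ((k : ℝ) + i)|) / _))]
  have hpos : (pos1 I x : ℝ) ≤ k := by
    obtain ⟨l, -, rfl⟩ := Finset.mem_image.1 hx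
    rw [pos1_apply I hI]
    exact_mod_cast l.2
  rw [Finset.sum_congr rfl (g := fun i : ℕ => ((k : ℝ) + 1 - pos1 I x) + i),
    sum_const_add_range]
  · have hkn : (k : ℝ) < n := by exact_mod_cast hk
    have hN : (n : ℝ) - k ≠ 0 := by linarith
    rw [Nat.cast_sub hk.le]
    field_simp
    ring
  · intro i _
    have : (0 : ℝ) ≤ i := Nat.cast_nonneg i
    rw [abs_of_nonpos (by linarith)]
    ring

lemma itemSum_neither {n k : ℕ} (hk : k < n) (I I' : Fin k → Fin n)
    (x : Fin n) (hx : x ∉ Finset.univ.image I) (hx' : x ∉ Finset.univ.image I') :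
    itemSum hk.le I I' x = (topCompat hk.le I).card * (topCompat hk.le I').card *
      ((((n - k : ℕ) : ℝ) ^ 2 - 1) / (3 * (n - k : ℕ))) := by
  unfold itemSum
  have h (s : ℝ) := mean_unranked hk I' x hx' (fun t => |s - t|)
  simp only [h]
  rw [mean_unranked hk I x hx
    (fun s => _ * ((∑ i ∈ Finset.range (n - k), |s - ((k : ℝ) + i)|) / _))]
  simp only [add_sub_add_left_eq_sub]
  rw [← Finset.mul_sum, ← Finset.sum_div, sum_abs_sub_range]
  have hN : ((n - k : ℕ) : ℝ) ≠ 0 := by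
    have : n - k ≠ 0 := by omega
    exact_mod_cast this
  field_simp

lemma sum_footrule {n k : ℕ} (hk : k ≤ n) (I I' : Fin k → Fin n) :
    ∑ σ ∈ topCompat hk I, ∑ σ' ∈ topCompat hk I', (spearmanFootrule σ σ' : ℝ)
      = ∑ x, itemSum hk I I' x := by
  unfold itemSum spearmanFootrule
  rw [Finset.sum_comm]
  simp only [Nat.cast_sum, Nat.cast_natAbs]
  push_cast
  rw [Finset.sum_comm]
  simp only [Finset.sum_comm (s := (Finset.univ : Finset (Fin n)))]

lemma card_tildeSet {n k : ℕ} (I I' : Fin k → Fin n) (hI : Function.Injective I) :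
    (tildeSet I I').card = k - (interJ I I').card := by
  unfold tildeSet
  rw [Finset.card_sdiff_of_subset (show interJ I I' ⊆ _ from Finset.inter_subset_left),
    Finset.card_image_of_injective _ hI, Finset.card_univ, Fintype.card_fin]

lemma mem_tildeSet {n k : ℕ} (I I' : Fin k → Fin n) (x : Fin n) :
    x ∈ tildeSet I I' ↔ x ∈ Finset.univ.image I ∧ x ∉ Finset.univ.image I' := by
  simp only [tildeSet, interJ, Finset.mem_sdiff, Finset.mem_inter]
  tauto

/-- Splitting of a sum over all items according to which of the two rankings contain the item. -/
lemma sum_items {n k : ℕ} (I I' : Fin k → Fin n) (f : Fin n → ℝ) :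
    ∑ x, f x = ∑ x ∈ interJ I I', f x + ∑ x ∈ tildeSet I I', f x + ∑ x ∈ tildeSet I' I, f x
      + ∑ x ∈ (Finset.univ.image I ∪ Finset.univ.image I')ᶜ, f x := by
  have h1 : Finset.univ.image I ∪ Finset.univ.image I' = Finset.univ.image I ∪ tildeSet I' I := by
    ext x
    simp only [Finset.mem_union, mem_tildeSet]
    tauto
  have h2 : Disjoint (Finset.univ.image I) (tildeSet I' I) :=
    Finset.disjoint_left.2 fun x hx hx' => ((mem_tildeSet _ _ _).1 hx').2 hx
  have h3 : ∑ x ∈ tildeSet I I', f x + ∑ x ∈ interJ I I', f x = ∑ x ∈ Finset.univ.image I, f x :=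
    Finset.sum_sdiff Finset.inter_subset_left
  rw [← Finset.sum_add_sum_compl (Finset.univ.image I ∪ Finset.univ.image I') f]
  congr 1
  rw [h1, Finset.sum_union h2, ← h3]
  ring

/-- Proposition 3 (Spearman's footrule case): explicit formula for the average Spearman's
footrule distance between two top-`k` partial rankings.  `Σ_{l=1}^p |c_{j_l} − c'_{j_l}|`
is expressed as the sum over common items of the absolute difference of their positions
in `I` and `I'`, and `Σ_{j=1}^r u_j` (positions in `I` of the items of `Ĩ` listed in
increasing order) as the sum of the positions in `I` of the items of `Ĩ`. -/
theorem davg_footrule_topk (n k : ℕ) (hk : k < n) (I I' : Fin k → Fin n)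
    (hI : Function.Injective I) (hI' : Function.Injective I') :
    let p : ℕ := (interJ I I').card
    let r : ℕ := k - p
    let m : ℕ := n - ((Finset.univ.image I) ∪ (Finset.univ.image I')).card
    let n' : ℕ := n - k - 1
    davgSets spearmanFootrule (topCompat hk.le I) (topCompat hk.le I') =
      (∑ x ∈ interJ I I', |(pos1 I x : ℝ) - (pos1 I' x : ℝ)|)
      + (r : ℝ) * ((n : ℝ) + (k : ℝ) + 1)
      - ((∑ x ∈ tildeSet I I', (pos1 I x : ℝ)) + (∑ x ∈ tildeSet I' I, (pos1 I' x : ℝ)))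
      + (m : ℝ) * (n' : ℝ)
      - (m : ℝ) * (n' : ℝ) * (2 * (n' : ℝ) + 1) / (3 * ((n' : ℝ) + 1)) := by
  intro p r m n'
  have hA : ((topCompat hk.le I).card : ℝ) ≠ 0 := by
    exact_mod_cast (Finset.card_pos.2 (topCompat_nonempty hk.le I hI)).ne'
  have hB : ((topCompat hk.le I').card : ℝ) ≠ 0 := by
    exact_mod_cast (Finset.card_pos.2 (topCompat_nonempty hk.le I' hI')).ne'
  have hr : (tildeSet I I').card = r := card_tildeSet I I' hI
  have hr' : (tildeSet I' I).card = r := by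
    rw [card_tildeSet I' I hI', show interJ I' I = interJ I I' from Finset.inter_comm _ _]
  have hm : ((Finset.univ.image I ∪ Finset.univ.image I')ᶜ).card = m := by
    rw [Finset.card_compl, Fintype.card_fin]
  have hn' : ((n - k : ℕ) : ℝ) = n' + 1 := by
    have : n - k = n' + 1 := by omega
    exact_mod_cast this
  rw [davgSets, sum_footrule, sum_items I I', div_eq_iff (mul_ne_zero hA hB)]
  rw [Finset.sum_congr rfl (s₁ := interJ I I') fun x hx =>
      itemSum_both hk.le I I' hI hI' x (Finset.mem_inter.1 hx).1 (Finset.mem_inter.1 hx).2,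
    Finset.sum_congr rfl (s₁ := tildeSet I I') fun x hx =>
      itemSum_left hk I I' hI x ((mem_tildeSet _ _ _).1 hx).1 ((mem_tildeSet _ _ _).1 hx).2,
    Finset.sum_congr rfl (s₁ := tildeSet I' I) fun x hx =>
      (itemSum_comm hk.le I I' x).trans <|
        itemSum_left hk I' I hI' x ((mem_tildeSet _ _ _).1 hx).1 ((mem_tildeSet _ _ _).1 hx).2,
    Finset.sum_congr rfl (s₁ := (Finset.univ.image I ∪ Finset.univ.image I')ᶜ) fun x hx =>
      itemSum_neither hk I I' x
        (fun h => Finset.mem_compl.1 hx (Finset.mem_union_left _ h))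
        (fun h => Finset.mem_compl.1 hx (Finset.mem_union_right _ h))]
  simp only [← Finset.mul_sum, Finset.sum_sub_distrib, Finset.sum_const, nsmul_eq_mul, hr, hr', hm,
    hn']
  have hpos : (n' : ℝ) + 1 ≠ 0 := by positivity
  field_simp
  ring
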